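/- If G is a graph with arboricity at most α, where α ≥ 2 is an integer, then |L(G)| ≤ (α+1)ν(G). -/

import Mathlib

/-- A graph has arboricity at most `a` if its edge set can be covered by `a`
forests. -/
def SimpleGraph.ArboricityLE {V : Type*} (G : SimpleGraph V) (a : ℕ) : Prop :=
  ∃ F : Fin a → SimpleGraph V, (∀ i, F i ≤ G) ∧ (∀ i, (F i).IsAcyclic) ∧
    ∀ u v : V, G.Adj u v → ∃ i, (F i).Adj u v

/-!
Choose `S` maximizing `|S| - |N(S)|`. Replacing `S` by `S \ N(S)` keeps it maximizing and makes it
independent, so the vertices split into `S`, `A = N(S)` and the rest `R`. By Hall's theorem,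
maximality lets `A` be matched into `S`, and lets every vertex of `R` choose a neighbor `f v` in `R`
injectively. A maximal `T ⊆ R` disjoint from `f(T)` satisfies `R ⊆ T ∪ f(T) ∪ f⁻¹(T)`, so the edges
from `v` to `f v` with `v` in `T` form a matching of size at least `|R| / 3`. Hence
`ν(G) ≥ |A| + |R| / 3`.

It remains to see that `S` contains at most `α |A|` locally superior vertices. Vertices of `A` of
degree at most `α` have at most `α` neighbors each. A locally superior vertex of `S` that has no
such neighbor has degree at least `α + 1`, and all its neighbors lie in the set `B` of vertices of
`A` of degree larger than `α`. If there are `b` of them, they span with `B` at least `(α + 1) b`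
edges, but a union of `α` forests has at most `α (b + |B|)` edges there, so `b ≤ α |B|`.
-/

section Sparsity

open SimpleGraph

variable {V : Type*} {G : SimpleGraph V} {a : ℕ}

theorem arboricityLE_induce (hG : G.ArboricityLE a) (s : Set V) :
    (G.induce s).ArboricityLE a := by
  obtain ⟨F, hFG, hF, hcover⟩ := hG
  exact ⟨fun i => (F i).induce s, fun i _ _ h => hFG i h, fun i => (hF i).induce s,
    fun u v h => hcover u v h⟩

variable [Finite V]

theorem ncard_edgeSet_le_of_isAcyclic (hG : G.IsAcyclic) : G.edgeSet.ncard ≤ Nat.card V := by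
  classical
  cases nonempty_fintype V
  cases isEmpty_or_nonempty V
  · simp [Subsingleton.elim G ⊥]
  obtain ⟨T, hGT, hT⟩ := (Set.toFinite {H : SimpleGraph V | H.IsAcyclic}).exists_le_maximal hG
  have hTree : T.IsTree := maximal_isAcyclic_iff_isTree.1 hT
  calc G.edgeSet.ncard ≤ T.edgeSet.ncard := Set.ncard_le_ncard (edgeSet_mono hGT)
    _ ≤ T.edgeSet.ncard + 1 := Nat.le_succ _
    _ = Nat.card V := (isTree_iff_connected_and_card.1 hTree).2

theorem ncard_edgeSet_le_of_arboricityLE (hG : G.ArboricityLE a) :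
    G.edgeSet.ncard ≤ a * Nat.card V := by
  obtain ⟨F, -, hF, hcover⟩ := hG
  have hsub : G.edgeSet ⊆ ⋃ i, (F i).edgeSet := by
    rintro ⟨u, v⟩ h
    exact Set.mem_iUnion.2 (hcover u v h)
  calc G.edgeSet.ncard ≤ (⋃ i, (F i).edgeSet).ncard := Set.ncard_le_ncard hsub
    _ ≤ ∑ i, (F i).edgeSet.ncard := Set.ncard_iUnion_le_of_fintype _
    _ ≤ ∑ _i : Fin a, Nat.card V :=
        Finset.sum_le_sum fun i _ => ncard_edgeSet_le_of_isAcyclic (hF i)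
    _ = a * Nat.card V := by simp

theorem ncard_edgeSet_induce_of_support_subset {s : Set V} (hs : G.support ⊆ s) :
    (G.induce s).edgeSet.ncard = G.edgeSet.ncard := by
  classical
  cases nonempty_fintype V
  simpa only [← Set.ncard_coe_finset, coe_edgeFinset] using
    card_edgeFinset_induce_of_support_subset hs

end Sparsity

open Finset SimpleGraph

section Matching

variable {V : Type*} {G : SimpleGraph V}

theorem ncard_verts_eq_two_mul_ncard_edgeSet [Finite V] {M : G.Subgraph} (hM : M.IsMatching) :
    M.verts.ncard = 2 * M.edgeSet.ncard := by
  classical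
  have := Fintype.ofFinite M.verts
  have hedges : #M.coe.edgeFinset = M.edgeSet.ncard := by
    rw [← M.image_coe_edgeSet_coe,
      Set.ncard_image_of_injective _ (Sym2.map.injective Subtype.val_injective),
      ← coe_edgeFinset, Set.ncard_coe_finset]
  rw [Subgraph.isMatching_iff_forall_degree] at hM
  rw [← hedges, ← M.coe.sum_degrees_eq_twice_card_edges]
  simp [hM, card_univ]

theorem exists_isMatching_of_injOn [Finite V] {s : Set V} {f : V → V} (hf : Set.InjOn f s)
    (hadj : ∀ v ∈ s, G.Adj v (f v)) (hdisj : Disjoint s (f '' s)) :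
    ∃ M : G.Subgraph, M.IsMatching ∧ M.verts = s ∪ f '' s ∧ M.edgeSet.ncard = s.ncard := by
  obtain ⟨M, hverts, hM⟩ := Subgraph.IsMatching.exists_of_disjoint_sets_of_equiv hdisj
    (hf.bijOn_image.equiv f) (fun v => hadj v v.2)
  refine ⟨M, hM, hverts, ?_⟩
  have hcard := ncard_verts_eq_two_mul_ncard_edgeSet hM
  rw [hverts, Set.ncard_union_eq hdisj, hf.ncard_image] at hcard
  lia

theorem exists_isMatching_ncard_edgeSet_eq_add [Finite V] {M N : G.Subgraph} (hM : M.IsMatching)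
    (hN : N.IsMatching) (hdisj : Disjoint M.verts N.verts) :
    ∃ K : G.Subgraph, K.IsMatching ∧ K.edgeSet.ncard = M.edgeSet.ncard + N.edgeSet.ncard := by
  refine ⟨M ⊔ N, hM.sup hN ?_, ?_⟩
  · rwa [hM.support_eq_verts, hN.support_eq_verts]
  · rw [Subgraph.edgeSet_sup, Set.ncard_union_eq]
    exact (Subgraph.disjoint_verts_iff_disjoint.1 hdisj).edgeSet

variable [DecidableEq V]

theorem exists_subset_disjoint_image_card_le_three_mul {s : Finset V} {f : V → V}
    (hf : Set.InjOn f s) (hne : ∀ v ∈ s, f v ≠ v) :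
    ∃ t ⊆ s, Disjoint t (t.image f) ∧ #s ≤ 3 * #t := by
  obtain ⟨t, ht⟩ := ({t ∈ s.powerset | Disjoint t (t.image f)}).exists_maximal ⟨∅, by simp⟩
  obtain ⟨hts, hdisj⟩ : t ⊆ s ∧ Disjoint t (t.image f) := by simpa using ht.prop
  refine ⟨t, hts, hdisj, ?_⟩
  have hcover : s ⊆ t ∪ t.image f ∪ {v ∈ s | f v ∈ t} := by
    intro v hv
    by_contra hout
    have hinsert : Disjoint (insert v t) ((insert v t).image f) := by
      rw [Finset.disjoint_left] at hdisj ⊢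
      grind
    have hvt : insert v t ⊆ t := ht.le_of_ge (by grind) (subset_insert v t)
    grind
  have hpreimage : #{v ∈ s | f v ∈ t} ≤ #t :=
    card_le_card_of_injOn f (fun v hv => (mem_filter.1 hv).2)
      (hf.mono (coe_subset.2 (filter_subset _ _)))
  calc #s ≤ #(t ∪ t.image f ∪ {v ∈ s | f v ∈ t}) := card_le_card hcover
    _ ≤ #t + #(t.image f) + #{v ∈ s | f v ∈ t} :=
        (card_union_le _ _).trans (Nat.add_le_add_right (card_union_le _ _) _)
    _ ≤ 3 * #t := by
        have himage : #(t.image f) ≤ #t := card_image_le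
        lia

end Matching

section CriticalSet

variable {V : Type*} [Fintype V] [DecidableEq V] (G : SimpleGraph V) [DecidableRel G.Adj]

/-- The open neighborhood `N(s)` of a set of vertices. It may meet `s`. -/
def openNbhd (s : Finset V) : Finset V := s.biUnion fun v => G.neighborFinset v

/-- A critical set of vertices: one maximizing the difference `|s| - |N(s)|`. The inequality
`|t| - |N(t)| ≤ |s| - |N(s)|` is rearranged to avoid subtraction. -/
def IsCriticalSet (s : Finset V) : Prop :=
  ∀ t : Finset V, #t + #(openNbhd G s) ≤ #s + #(openNbhd G t)

variable {G} {s t : Finset V}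

theorem mem_openNbhd {v : V} : v ∈ openNbhd G s ↔ ∃ u ∈ s, G.Adj u v := by
  simp [openNbhd]

theorem exists_injOn_adj_of_card_le
    (hall : ∀ u ⊆ s, #u ≤ #(openNbhd G u ∩ t)) :
    ∃ f : V → V, Set.InjOn f s ∧ ∀ v ∈ s, f v ∈ t ∧ G.Adj v (f v) := by
  have hall' (u : Finset s) : #u ≤ #(u.biUnion fun v => G.neighborFinset v ∩ t) := by
    have hu := hall (u.map (Function.Embedding.subtype _)) (map_subtype_subset u)
    rwa [card_map, openNbhd, map_eq_image, image_biUnion, biUnion_inter] at hu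
  obtain ⟨f, hf, hft⟩ := (all_card_le_biUnion_card_iff_exists_injective _).1 hall'
  refine ⟨fun v => if hv : v ∈ s then f ⟨v, hv⟩ else v, ?_, ?_⟩
  · intro v hv w hw hvw
    rw [mem_coe] at hv hw
    exact congrArg Subtype.val (hf (by simpa only [hv, hw, dif_pos] using hvw))
  · intro v hv
    have hfv := mem_inter.1 (hft ⟨v, hv⟩)
    simpa only [hv, dif_pos, mem_neighborFinset, and_comm] using hfv

theorem disjoint_openNbhd_sdiff_openNbhd (s : Finset V) :
    Disjoint (s \ openNbhd G s) (openNbhd G (s \ openNbhd G s)) := by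
  simp only [Finset.disjoint_left, mem_sdiff, mem_openNbhd]
  grind

namespace IsCriticalSet

variable (G) in
theorem exists_isCriticalSet : ∃ s, IsCriticalSet G s := by
  obtain ⟨s, -, hs⟩ := exists_max_image univ (fun s : Finset V => (#s : ℤ) - #(openNbhd G s))
    univ_nonempty
  exact ⟨s, fun t => by linarith [hs t (mem_univ t)]⟩

theorem sdiff_openNbhd (hs : IsCriticalSet G s) : IsCriticalSet G (s \ openNbhd G s) := by
  have hsub : openNbhd G (s \ openNbhd G s) ⊆ openNbhd G s \ s := by
    intro v
    simp only [mem_sdiff, mem_openNbhd]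
    grind [G.adj_comm]
  have hcard := card_le_card hsub
  have hs_split := card_sdiff_add_card_inter s (openNbhd G s)
  have hN_split := card_sdiff_add_card_inter (openNbhd G s) s
  rw [inter_comm] at hN_split
  intro t
  have hmax := hs t
  lia

variable (G) in
theorem exists_disjoint_openNbhd : ∃ s, IsCriticalSet G s ∧ Disjoint s (openNbhd G s) := by
  obtain ⟨s, hs⟩ := exists_isCriticalSet G
  exact ⟨_, hs.sdiff_openNbhd, disjoint_openNbhd_sdiff_openNbhd s⟩

theorem exists_injOn_openNbhd (hs : IsCriticalSet G s) :
    ∃ f : V → V, Set.InjOn f (openNbhd G s) ∧ ∀ v ∈ openNbhd G s, f v ∈ s ∧ G.Adj v (f v) := by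
  refine exists_injOn_adj_of_card_le fun u hu => ?_
  have hsub : openNbhd G (s \ openNbhd G u) ⊆ openNbhd G s \ u := by
    intro v
    simp only [mem_sdiff, mem_openNbhd]
    grind [G.adj_comm]
  have hcard := card_le_card hsub
  have hu_split := card_sdiff_add_card_eq_card hu
  have hs_split := card_sdiff_add_card_inter s (openNbhd G u)
  rw [inter_comm] at hs_split
  have hmax := hs (s \ openNbhd G u)
  lia

theorem exists_injOn_compl (hs : IsCriticalSet G s) :
    ∃ f : V → V, Set.InjOn f ↑(s ∪ openNbhd G s)ᶜ ∧
      ∀ v ∈ (s ∪ openNbhd G s)ᶜ, f v ∈ (s ∪ openNbhd G s)ᶜ ∧ G.Adj v (f v) := by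
  refine exists_injOn_adj_of_card_le fun u hu => ?_
  have hdisj : Disjoint s u := by
    rw [Finset.disjoint_left]
    grind [mem_compl]
  have hsub : openNbhd G (s ∪ u) ⊆
      openNbhd G s ∪ (openNbhd G u ∩ (s ∪ openNbhd G s)ᶜ) := by
    intro v
    have hvu : ∀ w ∈ u, w ∉ openNbhd G s := by grind [mem_compl]
    simp only [mem_union, mem_inter, mem_compl, mem_openNbhd] at hvu ⊢
    grind [G.adj_comm]
  have hcard := (card_le_card hsub).trans (card_union_le _ _)
  have hunion := card_union_of_disjoint hdisj
  have hmax := hs (s ∪ u)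
  lia

theorem exists_isMatching (hs : IsCriticalSet G s) (hdisj : Disjoint s (openNbhd G s)) :
    ∃ M : G.Subgraph, M.IsMatching ∧
      3 * #(openNbhd G s) + #(s ∪ openNbhd G s)ᶜ ≤ 3 * M.edgeSet.ncard := by
  obtain ⟨f, hf, hfs⟩ := hs.exists_injOn_openNbhd
  obtain ⟨g, hg, hgr⟩ := hs.exists_injOn_compl
  obtain ⟨t, htr, ht, hcard⟩ :=
    exists_subset_disjoint_image_card_le_three_mul hg fun v hv => (hgr v hv).2.ne'
  obtain ⟨M, hM, hMverts, hMcard⟩ := exists_isMatching_of_injOn hf (fun v hv => (hfs v hv).2)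
    (Set.disjoint_left.2 (by grind [Finset.disjoint_left]))
  obtain ⟨N, hN, hNverts, hNcard⟩ := exists_isMatching_of_injOn (hg.mono (coe_subset.2 htr))
    (fun v hv => (hgr v (htr hv)).2) (mod_cast ht)
  have hMN : Disjoint M.verts N.verts := by
    rw [hMverts, hNverts, Set.disjoint_left]
    grind [mem_compl]
  obtain ⟨K, hK, hKcard⟩ := exists_isMatching_ncard_edgeSet_eq_add hM hN hMN
  rw [Set.ncard_coe_finset] at hMcard hNcard
  exact ⟨K, hK, by lia⟩

end IsCriticalSet

end CriticalSet

section LocallySuperior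

variable {V : Type*} [Fintype V] {G : SimpleGraph V} [DecidableRel G.Adj]

variable (G) in
/-- The set `L(G)` of locally superior vertices, those having a neighbor of no larger degree. -/
def locallySuperior : Finset V := {v | ∃ w, G.Adj v w ∧ G.degree w ≤ G.degree v}

theorem mem_locallySuperior {v : V} :
    v ∈ locallySuperior G ↔ ∃ w, G.Adj v w ∧ G.degree w ≤ G.degree v := by
  simp [locallySuperior]

variable [DecidableEq V] {s t : Finset V} {α : ℕ}

theorem sum_degree_le_ncard_edgeSet_induce_union (hst : Disjoint s t) (hN : openNbhd G s ⊆ t) :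
    ∑ v ∈ s, G.degree v ≤ (G.induce (↑(s ∪ t) : Set V)).edgeSet.ncard := by
  have hdeg : ∀ v ∈ s, G.degree v ≤ (G.between s t).degree v := fun v hv =>
    card_le_card fun w hw => by
      have hvw : G.Adj v w := by simpa using hw
      simpa [between_adj] using ⟨hvw, Or.inl ⟨hv, hN (mem_openNbhd.2 ⟨v, hv, hvw⟩)⟩⟩
  have hsupport : (G.between s t).support ⊆ ↑(s ∪ t) := by
    rintro v ⟨w, hvw⟩
    grind [between_adj]
  calc ∑ v ∈ s, G.degree v ≤ ∑ v ∈ s, (G.between s t).degree v := sum_le_sum hdeg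
    _ = #(G.between s t).edgeFinset :=
        isBipartiteWith_sum_degrees_eq_card_edges (between_isBipartiteWith (mod_cast hst))
    _ = (G.between s t).edgeSet.ncard := by rw [← Set.ncard_coe_finset, coe_edgeFinset]
    _ = ((G.between s t).induce (↑(s ∪ t) : Set V)).edgeSet.ncard :=
        (ncard_edgeSet_induce_of_support_subset hsupport).symm
    _ ≤ (G.induce (↑(s ∪ t) : Set V)).edgeSet.ncard :=
        Set.ncard_le_ncard (edgeSet_mono fun _ _ h => between_le h)

theorem card_le_mul_card_of_lt_degree
    (hsparse : ∀ u : Finset V, (G.induce (u : Set V)).edgeSet.ncard ≤ α * #u)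
    (hst : Disjoint s t) (hN : openNbhd G s ⊆ t) (hdeg : ∀ v ∈ s, α < G.degree v) :
    #s ≤ α * #t := by
  have hedges : #s * (α + 1) ≤ α * (#s + #t) :=
    calc #s * (α + 1) ≤ ∑ v ∈ s, G.degree v := by
          simpa using card_nsmul_le_sum s _ (α + 1) hdeg
      _ ≤ (G.induce (↑(s ∪ t) : Set V)).edgeSet.ncard :=
          sum_degree_le_ncard_edgeSet_induce_union hst hN
      _ ≤ α * #(s ∪ t) := hsparse _
      _ = α * (#s + #t) := by rw [card_union_of_disjoint hst]
  linarith

theorem card_openNbhd_le_mul (hdeg : ∀ v ∈ s, G.degree v ≤ α) : #(openNbhd G s) ≤ #s * α :=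
  card_biUnion_le_card_mul s _ α (by simpa using hdeg)

theorem card_locallySuperior_inter_le
    (hsparse : ∀ u : Finset V, (G.induce (u : Set V)).edgeSet.ncard ≤ α * #u)
    (hs : Disjoint s (openNbhd G s)) :
    #(locallySuperior G ∩ s) ≤ α * #(openNbhd G s) := by
  let low : Finset V := {w ∈ openNbhd G s | G.degree w ≤ α}
  let high : Finset V := {w ∈ openNbhd G s | ¬ G.degree w ≤ α}
  let rest : Finset V := (locallySuperior G ∩ s) \ openNbhd G low
  have hrest_nbhd : openNbhd G rest ⊆ high := by
    intro w hw
    obtain ⟨v, hv, hvw⟩ := mem_openNbhd.1 hw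
    have hws : w ∈ openNbhd G s := mem_openNbhd.2 ⟨v, by grind, hvw⟩
    have hw_low : w ∉ low := fun h => (mem_sdiff.1 hv).2 (mem_openNbhd.2 ⟨w, h, hvw.symm⟩)
    grind
  have hrest_degree : ∀ v ∈ rest, α < G.degree v := by
    intro v hv
    obtain ⟨w, hvw, hle⟩ := mem_locallySuperior.1 (show v ∈ locallySuperior G by grind)
    have hw : w ∈ high := hrest_nbhd (mem_openNbhd.2 ⟨v, hv, hvw⟩)
    grind
  have hrest : #rest ≤ α * #high :=
    card_le_mul_card_of_lt_degree hsparse (hs.mono (by grind) (by grind)) hrest_nbhd hrest_degree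
  have hlow : #(openNbhd G low) ≤ #low * α := card_openNbhd_le_mul fun w hw => (mem_filter.1 hw).2
  calc #(locallySuperior G ∩ s) ≤ #rest + #(openNbhd G low) := by
        rw [← card_sdiff_add_card_inter _ (openNbhd G low)]
        exact Nat.add_le_add_left (card_le_card inter_subset_right) _
    _ ≤ α * #high + #low * α := Nat.add_le_add hrest hlow
    _ = α * (#low + #high) := by ring
    _ = α * #(openNbhd G s) := by rw [card_filter_add_card_filter_not]

end LocallySuperior

theorem locally_superior_le_matching_of_arboricity_general {V : Type*} [Fintype V]
    (G : SimpleGraph V) [DecidableRel G.Adj] (α : ℕ) (hα : 2 ≤ α)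
    (hsparse : ∀ s : Finset V, (G.induce (s : Set V)).edgeSet.ncard ≤ α * #s) :
    ∃ M : G.Subgraph, M.IsMatching ∧
      ({v : V | ∃ w, G.Adj v w ∧ G.degree w ≤ G.degree v} : Set V).ncard ≤
        (α + 1) * M.edgeSet.ncard := by
  classical
  obtain ⟨s, hs, hdisj⟩ := IsCriticalSet.exists_disjoint_openNbhd G
  obtain ⟨M, hM, hcard⟩ := hs.exists_isMatching hdisj
  refine ⟨M, hM, ?_⟩
  have hcover : locallySuperior G ⊆
      (locallySuperior G ∩ s) ∪ openNbhd G s ∪ (s ∪ openNbhd G s)ᶜ := by grind [mem_compl]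
  calc ({v : V | ∃ w, G.Adj v w ∧ G.degree w ≤ G.degree v} : Set V).ncard
      = #(locallySuperior G) := by rw [← Set.ncard_coe_finset]; simp [locallySuperior]
    _ ≤ #(locallySuperior G ∩ s) + #(openNbhd G s) + #(s ∪ openNbhd G s)ᶜ :=
        (card_le_card hcover).trans
          ((card_union_le _ _).trans (Nat.add_le_add_right (card_union_le _ _) _))
    _ ≤ α * #(openNbhd G s) + #(openNbhd G s) + #(s ∪ openNbhd G s)ᶜ := by
        gcongr
        exact card_locallySuperior_inter_le hsparse hdisj
    _ ≤ (α + 1) * M.edgeSet.ncard := by nlinarith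

/-- If `G` has arboricity at most `α` with `α ≥ 2`, then
`|L(G)| ≤ (α+1)ν(G)`. -/
theorem locally_superior_le_matching_of_arboricity {V : Type*} [Fintype V]
    (G : SimpleGraph V) [DecidableRel G.Adj] (α : ℕ) (hα : 2 ≤ α)
    (harb : G.ArboricityLE α) :
    ∃ M : G.Subgraph, M.IsMatching ∧
      ({v : V | ∃ w, G.Adj v w ∧ G.degree w ≤ G.degree v} : Set V).ncard ≤
        (α + 1) * M.edgeSet.ncard :=
  locally_superior_le_matching_of_arboricity_general G α hα fun s => by
    simpa using ncard_edgeSet_le_of_arboricityLE (arboricityLE_induce harb s)
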